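/- arXiv:1910.12738 — 8 statements merged into one kernel-verified Lean document; each statement's English description precedes it below -/
import Mathlib

section
/- For every integer n ≥ 4, every orientation of the cycle graph C_n admits a distinguishing vertex-labelling with 2 labels. In particular, the labelling assigning label 1 to two fixed adjacent vertices v_1, v_2 and label 2 to all other vertices is distinguishing for every orientation of C_n. -/
/-- An orientation of a graph with adjacency relation `Adj`: an asymmetric relation whose
symmetric closure is exactly `Adj`. -/
def IsOrientation {V : Type*} (Adj : V → V → Prop) (A : V → V → Prop) : Prop :=
  (∀ u v, A u v → ¬ A v u) ∧ (∀ u v, (A u v ∨ A v u) ↔ Adj u v)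

/-- An automorphism of an oriented graph `A`. -/
def IsAutom {V : Type*} (A : V → V → Prop) (φ : Equiv.Perm V) : Prop :=
  ∀ u v, A u v ↔ A (φ u) (φ v)

/-- A distinguishing vertex-labelling of an oriented graph `A` with `r` labels:
the only automorphism preserving all the vertex labels is the identity. -/
def IsDistVertexLabelling {V : Type*} (A : V → V → Prop) (r : ℕ) (lab : V → Fin r) : Prop :=
  ∀ φ : Equiv.Perm V, IsAutom A φ → (∀ u, lab (φ u) = lab u) → φ = 1

/-- The adjacency relation of the cycle `C_n` on vertices `0, …, n-1` (n ≥ 3). -/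
def cycleAdj (n : ℕ) (u v : Fin n) : Prop :=
  (u.val + 1) % n = v.val ∨ (v.val + 1) % n = u.val

/-!
An automorphism that preserves the labels maps the edge `ab` to itself. It cannot exchange `a` and
`b`, since that would reverse the arc between them, so it fixes both. In a connected graph of
maximum degree at most two this determines the automorphism: of the at most two neighbours of a
fixed vertex, one is the fixed vertex already reached, so the other one is fixed as well.
-/

/-- An automorphism of an orientation, viewed as an automorphism of the underlying graph. -/
def IsAutom.toGraphIso {V : Type*} {G : SimpleGraph V} {A : V → V → Prop} {φ : Equiv.Perm V}
    (hφ : IsAutom A φ) (hA : IsOrientation G.Adj A) : G ≃g G where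
  toEquiv := φ
  map_rel_iff' {u v} := by rw [← hA.2, ← hA.2, ← hφ, ← hφ]

section Pair

variable {V : Type*} {Adj A : V → V → Prop} {φ : Equiv.Perm V} {a b : V}

theorem IsAutom.not_swap_of_adj (hφ : IsAutom A φ) (hA : IsOrientation Adj A) (hab : Adj a b) :
    ¬(φ a = b ∧ φ b = a) := by
  rintro ⟨ha, hb⟩
  have arc_reversed : A a b ↔ A b a := by simpa only [ha, hb] using hφ a b
  rcases (hA.2 a b).2 hab with h | h
  · exact hA.1 a b h (arc_reversed.1 h)
  · exact hA.1 b a h (arc_reversed.2 h)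

theorem IsAutom.eq_and_eq_of_mapsTo_pair (hφ : IsAutom A φ) (hA : IsOrientation Adj A)
    (hab : Adj a b) (hmaps : Set.MapsTo φ {a, b} {a, b}) : φ a = a ∧ φ b = b := by
  have no_swap := hφ.not_swap_of_adj hA hab
  have ha : φ a = a ∨ φ a = b := hmaps (.inl rfl)
  have hb : φ b = a ∨ φ b = b := hmaps (.inr rfl)
  have hinj : φ a = φ b → a = b := fun h ↦ φ.injective h
  grind

end Pair

theorem eq_of_mem_of_encard_le_two {α : Type*} {s : Set α} (hs : s.encard ≤ 2) {x y z : α}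
    (hx : x ∈ s) (hy : y ∈ s) (hz : z ∈ s) (hyx : y ≠ x) (hzx : z ≠ x) : y = z := by
  have hcard : (s \ {x}).encard ≤ 1 := by
    rw [← Set.encard_sdiff_singleton_add_one hx, ← one_add_one_eq_two] at hs
    exact (ENat.add_le_add_iff_right ENat.one_ne_top).1 hs
  exact Set.encard_le_one_iff.1 hcard y z ⟨hy, hyx⟩ ⟨hz, hzx⟩

section InjectiveHom

open SimpleGraph

variable {V W : Type*} {G : SimpleGraph V} {H : SimpleGraph W} {f g : G →g H}

theorem hom_apply_eq_of_adj_adj (hdeg : ∀ w, (H.neighborSet w).encard ≤ 2)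
    (hf : Function.Injective f) (hg : Function.Injective g) {u v w : V}
    (huv : G.Adj u v) (hvw : G.Adj v w) (hu : f u = g u) (hv : f v = g v) : f w = g w := by
  rcases eq_or_ne w u with rfl | hwu
  · exact hu
  · exact eq_of_mem_of_encard_le_two (hdeg (f v)) (x := f u)
      (f.map_adj huv.symm) (f.map_adj hvw) (hv ▸ g.map_adj hvw)
      (hf.ne hwu) (hu ▸ hg.ne hwu)

theorem hom_eq_of_eq_on_adj_pair (hG : G.Preconnected)
    (hdeg : ∀ w, (H.neighborSet w).encard ≤ 2)
    (hf : Function.Injective f) (hg : Function.Injective g) {a b : V}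
    (hab : G.Adj a b) (ha : f a = g a) (hb : f b = g b) : f = g := by
  have agree_near (v : V) : f v = g v ∧ ∀ w, G.Adj v w → f w = g w := by
    induction (reachable_iff_reflTransGen a v).1 (hG a v) with
    | refl => exact ⟨ha, fun w haw ↦ hom_apply_eq_of_adj_adj hdeg hf hg hab.symm haw hb ha⟩
    | @tail u v _ huv ih =>
      have hv := ih.2 v huv
      exact ⟨hv, fun w hvw ↦ hom_apply_eq_of_adj_adj hdeg hf hg huv hvw ih.1 hv⟩
  ext v
  exact (agree_near v).1

end InjectiveHom

section Cycle

variable {n : ℕ}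

theorem cycleAdj_eq_cycleGraph_adj : cycleAdj (n + 2) = (SimpleGraph.cycleGraph (n + 2)).Adj := by
  ext u v
  rw [SimpleGraph.cycleGraph_adj, or_comm, sub_eq_iff_eq_add', sub_eq_iff_eq_add',
    Fin.ext_iff, Fin.ext_iff]
  simp only [cycleAdj, Fin.val_add, Fin.val_one, eq_comm]

theorem encard_cycleGraph_neighborSet_le_two (v : Fin (n + 2)) :
    ((SimpleGraph.cycleGraph (n + 2)).neighborSet v).encard ≤ 2 := by
  rw [SimpleGraph.cycleGraph_neighborSet]
  calc ({v - 1, v + 1} : Set (Fin (n + 2))).encard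
      ≤ ({v + 1} : Set (Fin (n + 2))).encard + 1 := Set.encard_insert_le _ _
    _ = 2 := by rw [Set.encard_singleton, one_add_one_eq_two]

theorem fin_val_le_one_iff (u : Fin (n + 2)) : u.val ≤ 1 ↔ u = 0 ∨ u = 1 := by
  simp only [Fin.ext_iff, Fin.val_zero, Fin.val_one]
  lia

end Cycle

theorem cycle_orientation_distinguishing_two_vertex_labelling_general {V : Type*}
    {G : SimpleGraph V} (hG : G.Preconnected) (hdeg : ∀ v, (G.neighborSet v).encard ≤ 2)
    {A : V → V → Prop} (hA : IsOrientation G.Adj A) {a b : V} (hab : G.Adj a b)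
    {r : ℕ} {lab : V → Fin r} (hlab : ∀ u, lab u = lab a ∨ lab u = lab b → u = a ∨ u = b) :
    IsDistVertexLabelling A r lab := by
  intro φ hφ hpres
  have hmaps : Set.MapsTo φ {a, b} {a, b} := by
    rintro u (rfl | rfl)
    · exact hlab _ (.inl (hpres u))
    · exact hlab _ (.inr (hpres u))
  obtain ⟨ha, hb⟩ := hφ.eq_and_eq_of_mapsTo_pair hA hab hmaps
  have hom_eq : (hφ.toGraphIso hA).toHom = SimpleGraph.Hom.id :=
    hom_eq_of_eq_on_adj_pair hG hdeg φ.injective Function.injective_id hab ha hb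
  ext v
  exact DFunLike.congr_fun hom_eq v

/-- For every integer `n ≥ 4`, every orientation of the cycle `C_n` admits a
distinguishing vertex-labelling with 2 labels; in particular, the labelling that gives
label 1 (here `0 : Fin 2`) to the two fixed adjacent vertices `v_1, v_2` and
label 2 (here `1 : Fin 2`) to all other vertices is distinguishing. -/
theorem cycle_orientation_distinguishing_two_vertex_labelling (n : ℕ) (hn : 4 ≤ n)
    (A : Fin n → Fin n → Prop) (hA : IsOrientation (cycleAdj n) A) :
    IsDistVertexLabelling A 2 (fun u => if u.val ≤ 1 then 0 else 1) ∧
    ∃ lab : Fin n → Fin 2, IsDistVertexLabelling A 2 lab := by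
  obtain ⟨m, rfl⟩ := Nat.exists_eq_add_of_le' (show 2 ≤ n by lia)
  rw [cycleAdj_eq_cycleGraph_adj] at hA
  have hdist : IsDistVertexLabelling A 2 (fun u => if u.val ≤ 1 then 0 else 1) :=
    cycle_orientation_distinguishing_two_vertex_labelling_general
      SimpleGraph.cycleGraph_preconnected encard_cycleGraph_neighborSet_le_two hA
      (a := 0) (b := 1) (by simp [SimpleGraph.cycleGraph_adj])
      (fun u ↦ by simp [← fin_val_le_one_iff])
  exact ⟨hdist, _, hdist⟩
end

section
/- For every integer n ≥ 2: (i) for every orientation of the star K_{1,n}, every distinguishing vertex-labelling uses at least ⌈n/2⌉ labels (there is no distinguishing vertex-labelling with fewer than ⌈n/2⌉ labels); and (ii) there exists an orientation of K_{1,n} (namely one in which the numbers of in-neighbours and out-neighbours of the central vertex differ by at most one) that admits a distinguishing vertex-labelling with ⌈n/2⌉ labels. -/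
/-- The adjacency relation of the star `K_{1,n}`: the central vertex is `none`,
the leaves are `some y` for `y : Fin n`. -/
def starAdj (n : ℕ) (u v : Option (Fin n)) : Prop :=
  (u = none ∧ v ≠ none) ∨ (v = none ∧ u ≠ none)

/-! An orientation of the star is determined by the set `s` of out-neighbours of the centre. For
`n ≥ 2` the centre is the only vertex with more than one neighbour, so every automorphism fixes it.
The automorphisms are therefore exactly the permutations of the leaves that preserve `s`, and a
labelling is distinguishing if and only if it is injective on `s` and on the set `sᶜ` of the other
leaves. Hence `r` labels suffice if and only if `max |s| |sᶜ| ≤ r`; since `|s| + |sᶜ| = n`, this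
maximum is at least `⌈n/2⌉`, with equality for a balanced orientation. -/

/-- The orientation of the star with leaf set `α` in which `s` is the set of out-neighbours of the
centre. As in `starAdj`, the centre is `none` and the leaves are `some i`. -/
def orientedStar {α : Type*} (s : Set α) : Option α → Option α → Prop
  | none, some i => i ∈ s
  | some i, none => i ∉ s
  | _, _ => False

namespace orientedStar

variable {α : Type*} {s : Set α}

theorem or_swap_iff {u v : Option α} :
    orientedStar s u v ∨ orientedStar s v u ↔ (u = none ∧ v ≠ none) ∨ (v = none ∧ u ≠ none) := by
  rcases u with _ | i <;> rcases v with _ | j <;> simp [orientedStar, em, em']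

theorem asymm {u v : Option α} (h : orientedStar s u v) : ¬ orientedStar s v u := by
  rcases u with _ | i <;> rcases v with _ | j <;> simp_all [orientedStar]

theorem ncard_setOf_none_left (s : Set α) : {w | orientedStar s none w}.ncard = s.ncard := by
  have image_eq : {w | orientedStar s none w} = some '' s := by
    ext (_ | i) <;> simp [orientedStar]
  rw [image_eq, Set.ncard_image_of_injective s (Option.some_injective α)]

theorem ncard_setOf_none_right (s : Set α) : {w | orientedStar s w none}.ncard = sᶜ.ncard := by
  have image_eq : {w | orientedStar s w none} = some '' sᶜ := by
    ext (_ | i) <;> simp [orientedStar]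
  rw [image_eq, Set.ncard_image_of_injective sᶜ (Option.some_injective α)]

theorem isAutom_optionCongr_iff {σ : Equiv.Perm α} :
    IsAutom (orientedStar s) (Equiv.optionCongr σ) ↔ ∀ i, i ∈ s ↔ σ i ∈ s := by
  simp [IsAutom, orientedStar, Option.forall, not_iff_not]

theorem apply_none_of_isAutom [Nontrivial α] {φ : Equiv.Perm (Option α)}
    (hφ : IsAutom (orientedStar s) φ) : φ none = none := by
  by_contra hcentre
  have apply_leaf (i : α) : φ (some i) = none := by
    have hadj : orientedStar s none (some i) ∨ orientedStar s (some i) none := by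
      simp [or_swap_iff]
    rw [hφ none, hφ (some i), or_swap_iff] at hadj
    exact (hadj.resolve_left fun h => hcentre h.1).1
  obtain ⟨i, j, hij⟩ := exists_pair_ne α
  exact hij (Option.some_injective α (φ.injective ((apply_leaf i).trans (apply_leaf j).symm)))

theorem exists_eq_optionCongr_of_isAutom [Nontrivial α] {φ : Equiv.Perm (Option α)}
    (hφ : IsAutom (orientedStar s) φ) : ∃ σ : Equiv.Perm α, φ = Equiv.optionCongr σ := by
  classical
  refine ⟨Equiv.removeNone φ, ?_⟩
  rw [map_equiv_removeNone, apply_none_of_isAutom hφ, Equiv.swap_self]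
  rfl

theorem eq_of_isDistVertexLabelling {r : ℕ} {lab : Option α → Fin r}
    (hlab : IsDistVertexLabelling (orientedStar s) r lab) {i j : α} (hs : i ∈ s ↔ j ∈ s)
    (hij : lab (some i) = lab (some j)) : i = j := by
  classical
  have swap_autom : IsAutom (orientedStar s) (Equiv.optionCongr (Equiv.swap i j)) :=
    isAutom_optionCongr_iff.2 fun k =>
      (Equiv.apply_swap_eq_self (v := (· ∈ s)) (propext hs) k).symm.to_iff
  have swap_lab : ∀ u, lab (Equiv.optionCongr (Equiv.swap i j) u) = lab u := by
    simpa only [Equiv.optionCongr_swap] using Equiv.apply_swap_eq_self hij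
  simpa using hlab _ swap_autom swap_lab

theorem isDistVertexLabelling_iff [Nontrivial α] {r : ℕ} {lab : Option α → Fin r} :
    IsDistVertexLabelling (orientedStar s) r lab ↔
      s.InjOn (fun i => lab (some i)) ∧ sᶜ.InjOn (fun i => lab (some i)) := by
  constructor
  · intro hlab
    exact ⟨fun i hi j hj => eq_of_isDistVertexLabelling hlab (iff_of_true hi hj),
      fun i hi j hj => eq_of_isDistVertexLabelling hlab (iff_of_false hi hj)⟩
  · rintro ⟨injOn_out, injOn_in⟩ φ hφ hlab
    obtain ⟨σ, rfl⟩ := exists_eq_optionCongr_of_isAutom hφ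
    rw [isAutom_optionCongr_iff] at hφ
    have hσ : σ = 1 := by
      ext i
      by_cases hi : i ∈ s
      · exact injOn_out ((hφ i).1 hi) hi (hlab (some i))
      · exact injOn_in (mt (hφ i).2 hi) hi (hlab (some i))
    rw [hσ, Equiv.optionCongr_one]

end orientedStar

theorem isOrientation_starAdj_iff {n : ℕ} {A : Option (Fin n) → Option (Fin n) → Prop} :
    IsOrientation (starAdj n) A ↔ ∃ s : Set (Fin n), A = orientedStar s := by
  constructor
  · rintro ⟨hasymm, hadj⟩
    refine ⟨{i | A none (some i)}, ?_⟩
    ext (_ | i) (_ | j)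
    · simpa [orientedStar, starAdj] using hadj none none
    · rfl
    · have hor : A none (some i) ∨ A (some i) none := by simp [hadj, starAdj]
      exact ⟨hasymm _ _, hor.resolve_left⟩
    · simpa [orientedStar] using fun h => by simpa [starAdj] using (hadj _ _).1 (.inl h)
  · rintro ⟨s, rfl⟩
    exact ⟨fun _ _ => orientedStar.asymm, fun _ _ => orientedStar.or_swap_iff⟩

theorem exists_injOn_of_ncard_le {α β : Type*} [Finite α] [Finite β] [Nonempty β] {s : Set α}
    (hs : s.ncard ≤ Nat.card β) : ∃ f : α → β, s.InjOn f := by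
  have encard_le : s.encard ≤ (Set.univ : Set β).encard := by
    rw [← s.toFinite.cast_ncard_eq, ← Set.finite_univ.cast_ncard_eq, Set.ncard_univ]
    exact_mod_cast hs
  obtain ⟨f, -, hf⟩ := s.toFinite.exists_injOn_of_encard_le encard_le
  exact ⟨f, hf⟩

theorem exists_injOn_injOn_compl {α β : Type*} [Finite α] [Finite β] [Nonempty β] {s : Set α}
    (hs : s.ncard ≤ Nat.card β) (hsc : sᶜ.ncard ≤ Nat.card β) :
    ∃ f : α → β, s.InjOn f ∧ sᶜ.InjOn f := by
  classical
  obtain ⟨f, hf⟩ := exists_injOn_of_ncard_le hs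
  obtain ⟨g, hg⟩ := exists_injOn_of_ncard_le hsc
  exact ⟨s.piecewise f g, hf.congr (s.piecewise_eqOn f g).symm,
    hg.congr (s.piecewise_eqOn_compl f g).symm⟩

theorem exists_isDistVertexLabelling_orientedStar_iff {α : Type*} [Finite α] [Nontrivial α]
    {s : Set α} {r : ℕ} :
    (∃ lab, IsDistVertexLabelling (orientedStar s) r lab) ↔ s.ncard ≤ r ∧ sᶜ.ncard ≤ r := by
  simp only [orientedStar.isDistVertexLabelling_iff]
  constructor
  · rintro ⟨lab, injOn_out, injOn_in⟩
    have ncard_le {t : Set α} (ht : t.InjOn (fun i => lab (some i))) : t.ncard ≤ r := by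
      rw [← ht.ncard_image]
      simpa using Set.ncard_le_card ((fun i => lab (some i)) '' t)
    exact ⟨ncard_le injOn_out, ncard_le injOn_in⟩
  · rintro ⟨hs, hsc⟩
    have r_ne_zero : r ≠ 0 := by
      have := s.ncard_add_ncard_compl
      have := Nat.card_pos (α := α)
      omega
    have : NeZero r := ⟨r_ne_zero⟩
    obtain ⟨f, hf⟩ := exists_injOn_injOn_compl (β := Fin r) (by simpa using hs) (by simpa using hsc)
    exact ⟨fun u => u.elim 0 f, hf⟩

/-- For every `n ≥ 2`: (i) for every orientation of the star `K_{1,n}`, every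
distinguishing vertex-labelling uses at least `⌈n/2⌉` labels; and (ii) there exists an
orientation of `K_{1,n}` — one in which the numbers of in-neighbours and out-neighbours
of the central vertex differ by at most one — admitting a distinguishing
vertex-labelling with `⌈n/2⌉` labels. -/
theorem star_min_distinguishing_number (n : ℕ) (hn : 2 ≤ n) :
    (∀ A : Option (Fin n) → Option (Fin n) → Prop, IsOrientation (starAdj n) A →
      ∀ r : ℕ, ∀ lab : Option (Fin n) → Fin r,
        IsDistVertexLabelling A r lab → (n + 1) / 2 ≤ r) ∧
    (∃ A : Option (Fin n) → Option (Fin n) → Prop, IsOrientation (starAdj n) A ∧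
      ({w | A none w} : Set (Option (Fin n))).ncard ≤
        ({w | A w none} : Set (Option (Fin n))).ncard + 1 ∧
      ({w | A w none} : Set (Option (Fin n))).ncard ≤
        ({w | A none w} : Set (Option (Fin n))).ncard + 1 ∧
      ∃ lab : Option (Fin n) → Fin ((n + 1) / 2),
        IsDistVertexLabelling A ((n + 1) / 2) lab) := by
  have : Nontrivial (Fin n) := Fin.nontrivial_iff_two_le.2 hn
  have ncard_add (s : Set (Fin n)) : s.ncard + sᶜ.ncard = n := by
    simpa using s.ncard_add_ncard_compl
  constructor
  · intro A hA r lab hlab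
    obtain ⟨s, rfl⟩ := isOrientation_starAdj_iff.1 hA
    have := exists_isDistVertexLabelling_orientedStar_iff.1 ⟨lab, hlab⟩
    have := ncard_add s
    omega
  · obtain ⟨s, -, hs⟩ : ∃ s ⊆ (Set.univ : Set (Fin n)), s.ncard = n / 2 :=
      Set.exists_subset_card_eq (by simpa using Nat.div_le_self n 2)
    have := ncard_add s
    refine ⟨orientedStar s, isOrientation_starAdj_iff.2 ⟨s, rfl⟩, ?_, ?_,
      exists_isDistVertexLabelling_orientedStar_iff.2 (by omega)⟩ <;>
    · rw [orientedStar.ncard_setOf_none_left, orientedStar.ncard_setOf_none_right]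
      omega
end

section
/- For every integer n ≥ 3, the balanced complete bipartite graph K_{n,n} admits a rigid orientation. In particular, the orientation in which the out-neighbourhood of x_i is {y_j : j ≤ i} for every i, 1 ≤ i ≤ n, is rigid. -/
/-- An oriented graph is rigid if its only automorphism is the identity. -/
def IsRigid {V : Type*} (A : V → V → Prop) : Prop :=
  ∀ φ : Equiv.Perm V, IsAutom A φ → φ = 1

/-- The adjacency relation of the complete bipartite graph `K_{m,n}`, with parts
`X = Fin m` (the left summand) and `Y = Fin n` (the right summand). -/
def bipAdj (m n : ℕ) (u v : Sum (Fin m) (Fin n)) : Prop :=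
  u.isLeft ≠ v.isLeft

/-- The orientation of `K_{n,n}` in which the out-neighbourhood of `x_i` is
`{y_j : j ≤ i}`. -/
def knnOrient (n : ℕ) : Sum (Fin n) (Fin n) → Sum (Fin n) (Fin n) → Prop
  | Sum.inl i, Sum.inr j => j ≤ i
  | Sum.inr j, Sum.inl i => i < j
  | _, _ => False

/-!
Write `x_i` and `y_j` for the two copies of a well-ordered index set. Along the interleaved order
`y_1 < x_1 < y_2 < x_2 < ⋯` every edge points downwards, and since `x_i → y_i` and `y_j → x_i` for
`i < j`, any vertex reaches every smaller one in at most two steps. So the transitive closure of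
the orientation is (the reverse of) a well-order. An automorphism of the orientation preserves its
transitive closure, and the only automorphism of a well-order is the identity.
-/

section Rigidity

variable {V : Type*} {A : V → V → Prop}

theorem IsAutom.transGen {φ : Equiv.Perm V} (hφ : IsAutom A φ) :
    IsAutom (Relation.TransGen A) φ := by
  refine fun u v => ⟨fun h => h.lift φ fun a b => (hφ a b).mp, fun h => ?_⟩
  have hφ_symm (a b : V) (hab : A a b) : A (φ.symm a) (φ.symm b) :=
    (hφ _ _).mpr (by simpa only [Equiv.apply_symm_apply] using hab)
  simpa only [Function.onFun, Equiv.symm_apply_apply] using h.lift φ.symm hφ_symm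

theorem IsRigid.of_transGen (h : IsRigid (Relation.TransGen A)) : IsRigid A :=
  fun φ hφ => h φ hφ.transGen

theorem IsRigid.swap (h : IsRigid A) : IsRigid (Function.swap A) :=
  fun φ hφ => h φ fun u v => hφ v u

theorem isRigid_of_isWellOrder (hA : IsWellOrder V A) : IsRigid A := by
  intro φ hφ
  let e : A ≃r A := ⟨φ, fun {u v} => (hφ u v).symm⟩
  ext u
  exact InitialSeg.eq e.toInitialSeg (.refl A) u

end Rigidity

section HalfGraph

variable {α : Type*}

/-- The position of a vertex in the interleaved order, in which `y_i = Sum.inr i` immediately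
precedes `x_i = Sum.inl i`; the second coordinate breaks the tie, being `false` on the `y` side. -/
def interleave : α ⊕ α → α ×ₗ Bool :=
  Sum.elim (fun i => toLex (i, true)) (fun j => toLex (j, false))

theorem interleave_injective : Function.Injective (interleave (α := α)) := by
  rintro (i | i) (j | j) h <;> simp_all [interleave]

variable [LinearOrder α]

/-- The half-graph orientation of the complete bipartite graph on two copies of `α`, extending
`knnOrient` to arbitrary linear orders: the out-neighbourhood of `x_i` is `{y_j : j ≤ i}`. -/
def halfGraphOrient : α ⊕ α → α ⊕ α → Prop
  | Sum.inl i, Sum.inr j => j ≤ i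
  | Sum.inr j, Sum.inl i => i < j
  | _, _ => False

theorem isOrientation_halfGraphOrient :
    IsOrientation (completeBipartiteGraph α α).Adj halfGraphOrient := by
  constructor
  · rintro (i | i) (j | j) <;> simp [halfGraphOrient]
  · rintro (i | i) (j | j) <;> simp [halfGraphOrient, le_or_gt, lt_or_ge]

theorem halfGraphOrient.interleave_lt {u v : α ⊕ α} (h : halfGraphOrient u v) :
    interleave v < interleave u := by
  rcases u with i | i <;> rcases v with j | j <;>
    simp_all [halfGraphOrient, interleave, Prod.Lex.toLex_lt_toLex, le_iff_lt_or_eq]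

theorem transGen_halfGraphOrient_of_interleave_lt {u v : α ⊕ α}
    (h : interleave v < interleave u) : Relation.TransGen halfGraphOrient u v := by
  have hxy (i : α) : halfGraphOrient (Sum.inl i) (Sum.inr i) := le_refl i
  have hyx {i j : α} (hij : i < j) : halfGraphOrient (Sum.inr j) (Sum.inl i) := hij
  rcases u with i | i <;> rcases v with j | j
  · have hji : j < i := by simpa [interleave, Prod.Lex.toLex_lt_toLex] using h
    exact .tail (.single (hxy i)) (hyx hji)
  · have hji : j ≤ i := by simpa [interleave, Prod.Lex.toLex_lt_toLex, le_iff_lt_or_eq] using h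
    exact .single hji
  · have hji : j < i := by simpa [interleave, Prod.Lex.toLex_lt_toLex, Bool.lt_iff] using h
    exact .single (hyx hji)
  · have hji : j < i := by simpa [interleave, Prod.Lex.toLex_lt_toLex] using h
    exact .tail (.single (hyx hji)) (hxy j)

theorem transGen_halfGraphOrient_iff {u v : α ⊕ α} :
    Relation.TransGen halfGraphOrient u v ↔ interleave v < interleave u := by
  refine ⟨fun h => ?_, transGen_halfGraphOrient_of_interleave_lt⟩
  induction h with
  | single h => exact h.interleave_lt
  | tail _ h ih => exact h.interleave_lt.trans ih

theorem isWellOrder_swap_transGen_halfGraphOrient [WellFoundedLT α] :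
    IsWellOrder (α ⊕ α) (Function.swap (Relation.TransGen halfGraphOrient)) := by
  have h : Function.swap (Relation.TransGen halfGraphOrient) =
      Function.onFun (· < ·) (interleave (α := α)) := by
    ext u v
    exact transGen_halfGraphOrient_iff
  rw [h]
  exact interleave_injective.isWellOrder (· < ·)

theorem isRigid_halfGraphOrient [WellFoundedLT α] : IsRigid (halfGraphOrient (α := α)) :=
  (isRigid_of_isWellOrder isWellOrder_swap_transGen_halfGraphOrient).swap.of_transGen

theorem balanced_complete_bipartite_rigid_orientation_general (α : Type*) [LinearOrder α]
    [WellFoundedLT α] :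
    IsOrientation (completeBipartiteGraph α α).Adj halfGraphOrient ∧
      IsRigid (halfGraphOrient (α := α)) :=
  ⟨isOrientation_halfGraphOrient, isRigid_halfGraphOrient⟩

end HalfGraph

theorem bipAdj_eq_completeBipartiteGraph_adj (m n : ℕ) :
    bipAdj m n = (completeBipartiteGraph (Fin m) (Fin n)).Adj := by
  ext (i | i) (j | j) <;> simp [bipAdj]

theorem knnOrient_eq_halfGraphOrient (n : ℕ) : knnOrient n = halfGraphOrient := by
  ext (i | i) (j | j) <;> rfl

/-- For every `n ≥ 3`, `K_{n,n}` admits a rigid orientation; in particular the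
orientation in which the out-neighbourhood of `x_i` is `{y_j : j ≤ i}` is rigid. -/
theorem balanced_complete_bipartite_rigid_orientation (n : ℕ) (hn : 3 ≤ n) :
    (IsOrientation (bipAdj n n) (knnOrient n) ∧ IsRigid (knnOrient n)) ∧
    ∃ A : Sum (Fin n) (Fin n) → Sum (Fin n) (Fin n) → Prop,
      IsOrientation (bipAdj n n) A ∧ IsRigid A := by
  have h := balanced_complete_bipartite_rigid_orientation_general (Fin n)
  rw [← bipAdj_eq_completeBipartiteGraph_adj, ← knnOrient_eq_halfGraphOrient] at h
  exact ⟨h, knnOrient n, h⟩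
end

section
/- For every integer n ≥ 2, every orientation of the balanced complete bipartite graph K_{n,n} admits a distinguishing vertex-labelling with n labels. In particular, the labelling assigning label i to both x_i and y_i, for every i with 1 ≤ i ≤ n, is distinguishing for every orientation of K_{n,n}, since every label is used on exactly two vertices that are joined by an arc. -/
/-! A label-preserving automorphism maps each label class to itself. When a class has at most two
vertices, it can only fix them or swap them, and a swap would reverse the arc joining them. -/

theorem IsAutom.not_adj_of_apply_apply_eq {V : Type*} {Adj A : V → V → Prop} {φ : Equiv.Perm V}
    (hφ : IsAutom A φ) (hA : IsOrientation Adj A) {u : V} (hu : φ (φ u) = u) :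
    ¬ Adj u (φ u) := by
  intro hadj
  have hswap : A u (φ u) ↔ A (φ u) u := by simpa only [hu] using hφ u (φ u)
  rcases (hA.2 _ _).2 hadj with h | h
  · exact hA.1 _ _ h (hswap.1 h)
  · exact hA.1 _ _ h (hswap.2 h)

theorem apply_apply_eq_of_encard_le_two {α : Type*} {f : α → α} {s : Set α}
    (hmaps : Set.MapsTo f s s) (hinj : Set.InjOn f s) (hs : s.encard ≤ 2) {a : α} (ha : a ∈ s) :
    f (f a) = a := by
  by_contra hffa
  have hfa : a ≠ f a := fun h => hffa (by rw [← h, ← h])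
  have hfa_ffa : f a ≠ f (f a) := hinj.ne ha (hmaps ha) hfa
  have hsub : {a, f a, f (f a)} ⊆ s := by
    rintro _ (rfl | rfl | rfl)
    exacts [ha, hmaps ha, hmaps (hmaps ha)]
  have hthree : ({a, f a, f (f a)} : Set α).encard = 3 :=
    Set.encard_eq_three.2 ⟨a, f a, f (f a), hfa, Ne.symm hffa, hfa_ffa, rfl⟩
  have hle : (3 : ℕ∞) ≤ 2 := hthree ▸ (Set.encard_le_encard hsub).trans hs
  exact absurd hle (by decide)

theorem balanced_complete_bipartite_dist_vertex_labelling_general {V : Type*} {r : ℕ}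
    {Adj A : V → V → Prop} (hA : IsOrientation Adj A) {lab : V → Fin r}
    (hcard : ∀ i, (lab ⁻¹' {i}).encard ≤ 2)
    (hadj : ∀ u v, lab u = lab v → u ≠ v → Adj u v) :
    IsDistVertexLabelling A r lab := by
  intro φ hφ hlab
  ext u
  by_contra hu
  have hmaps : Set.MapsTo φ (lab ⁻¹' {lab u}) (lab ⁻¹' {lab u}) :=
    fun v hv => (hlab v).trans hv
  have hinvol : φ (φ u) = u :=
    apply_apply_eq_of_encard_le_two hmaps φ.injective.injOn (hcard _) rfl
  exact hφ.not_adj_of_apply_apply_eq hA hinvol (hadj _ _ (hlab u).symm (Ne.symm hu))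

theorem encard_preimage_sumElim_id_id {α : Type*} (a : α) :
    (Sum.elim id id ⁻¹' {a} : Set (α ⊕ α)).encard = 2 := by
  have hpair : (Sum.elim id id ⁻¹' {a} : Set (α ⊕ α)) = {Sum.inl a, Sum.inr a} := by
    ext (b | b) <;> simp
  rw [hpair, Set.encard_pair Sum.inl_ne_inr]

theorem bipAdj_of_sumElim_id_id_eq {n : ℕ} (u v : Fin n ⊕ Fin n)
    (hlab : Sum.elim id id u = Sum.elim id id v) (huv : u ≠ v) : bipAdj n n u v := by
  rcases u with i | i <;> rcases v with j | j <;> simp_all [bipAdj]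

/-- For every `n ≥ 2`, every orientation of `K_{n,n}` admits a distinguishing
vertex-labelling with `n` labels; in particular the labelling assigning label `i` to
both `x_i` and `y_i` is distinguishing for every orientation of `K_{n,n}`. -/
theorem balanced_complete_bipartite_dist_vertex_labelling (n : ℕ) (hn : 2 ≤ n)
    (A : Sum (Fin n) (Fin n) → Sum (Fin n) (Fin n) → Prop)
    (hA : IsOrientation (bipAdj n n) A) :
    IsDistVertexLabelling A n (Sum.elim id id) ∧
    ∃ lab : Sum (Fin n) (Fin n) → Fin n, IsDistVertexLabelling A n lab := by
  have hdist := balanced_complete_bipartite_dist_vertex_labelling_general hA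
    (fun i => (encard_preimage_sumElim_id_id i).le) bipAdj_of_sumElim_id_id_eq
  exact ⟨hdist, _, hdist⟩
end

section
/- Let m, n be integers with 2 ≤ m < n, and suppose that the complete bipartite graph K_{m,n} admits no rigid orientation. Then there exists an orientation of K_{m,n} that admits a distinguishing vertex-labelling with ⌈n/(m−1)⌉ labels, and there exists an orientation of K_{m,n} that admits a distinguishing proper vertex-colouring with 1 + ⌈n/(m−1)⌉ colours. -/
/-!
Order `X` linearly and let each `y` choose a threshold `t y` in `X`, with an arc from `x` to `y`
when `x ≤ t y` and from `y` to `x` otherwise. The least vertex of `X` is then the only source, so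
automorphisms fix it and preserve the two parts. When every vertex of `X` but the last is a
threshold, an automorphism is strictly increasing on `X`, hence fixes `X` pointwise, and on `Y` it
can only permute vertices with equal thresholds. It suffices to label those differently: arrange `Y`
in rows of `m - 1` vertices, let the column choose the threshold and the row be the label. A proper
colouring uses one extra colour for all of `X`.
-/

theorem IsOrientation.adj_apply_iff {V : Type*} {Adj A : V → V → Prop} (hA : IsOrientation Adj A)
    {φ : Equiv.Perm V} (hφ : IsAutom A φ) (u v : V) : Adj (φ u) (φ v) ↔ Adj u v := by
  rw [← hA.2, ← hA.2, ← hφ u v, ← hφ v u]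

/-- A source of the oriented graph `A`: a vertex without in-neighbours. -/
def IsSource {V : Type*} (A : V → V → Prop) (v : V) : Prop :=
  ∀ u, ¬ A u v

theorem IsSource.apply {V : Type*} {A : V → V → Prop} {v : V} (hv : IsSource A v)
    {φ : Equiv.Perm V} (hφ : IsAutom A φ) : IsSource A (φ v) := by
  intro u
  obtain ⟨u, rfl⟩ := φ.surjective u
  rw [← hφ]
  exact hv u

section Threshold

variable {α β : Type*} [LinearOrder α]

/-- The orientation of the complete bipartite graph with parts `α` and `β` in which the
in-neighbours of `b : β` are the elements of `α` up to the threshold `t b`. -/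
def thresholdOrientation (t : β → α) : α ⊕ β → α ⊕ β → Prop
  | .inl a, .inr b => a ≤ t b
  | .inr b, .inl a => t b < a
  | _, _ => False

theorem isOrientation_thresholdOrientation (t : β → α) :
    IsOrientation (fun u v : α ⊕ β ↦ u.isLeft ≠ v.isLeft) (thresholdOrientation t) := by
  constructor
  · rintro (a | b) (a' | b') <;> simp [thresholdOrientation]
  · rintro (a | b) (a' | b') <;> simp [thresholdOrientation, le_or_gt, lt_or_ge]

theorem isSource_thresholdOrientation_iff [OrderBot α] {t : β → α} (ht : ⊥ ∈ Set.range t)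
    (v : α ⊕ β) : IsSource (thresholdOrientation t) v ↔ v = .inl ⊥ := by
  obtain ⟨b₀, hb₀⟩ := ht
  constructor
  · rcases v with a | b <;> intro hv
    · have le_threshold : a ≤ t b₀ := not_lt.1 (hv (.inr b₀))
      rw [le_bot_iff.1 (le_threshold.trans_eq hb₀)]
    · exact absurd bot_le (hv (.inl ⊥))
  · rintro rfl (_ | _) <;> simp [thresholdOrientation]

theorem isLeft_apply_of_isAutom_thresholdOrientation [OrderBot α] {t : β → α}
    (ht : ⊥ ∈ Set.range t) {φ : Equiv.Perm (α ⊕ β)} (hφ : IsAutom (thresholdOrientation t) φ)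
    (u : α ⊕ β) : (φ u).isLeft = u.isLeft := by
  have source_fixed : φ (.inl ⊥) = .inl ⊥ :=
    (isSource_thresholdOrientation_iff ht _).1
      (((isSource_thresholdOrientation_iff ht _).2 rfl).apply hφ)
  have adj_iff := (isOrientation_thresholdOrientation t).adj_apply_iff hφ u (.inl ⊥)
  rw [source_fixed] at adj_iff
  exact Bool.eq_iff_iff.2 (not_iff_not.1 adj_iff)

theorem eq_one_of_le_threshold_iff [WellFoundedLT α] {t : β → α}
    (ht : ∀ a, ¬ IsMax a → a ∈ Set.range t) {σ : Equiv.Perm α} {τ : β → β}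
    (h : ∀ a b, a ≤ t b ↔ σ a ≤ t (τ b)) : σ = 1 := by
  have σ_strictMono : StrictMono σ := by
    intro a a' haa'
    obtain ⟨b, rfl⟩ := ht a (not_isMax_of_lt haa')
    have le_threshold : σ (t b) ≤ t (τ b) := (h _ _).1 le_rfl
    have threshold_lt : t (τ b) < σ a' := not_le.1 (mt (h _ _).2 haa'.not_ge)
    exact le_threshold.trans_lt threshold_lt
  refine DFunLike.coe_injective ((σ_strictMono.range_inj strictMono_id).1 ?_)
  rw [σ.range_eq_univ, Set.range_id]

theorem isDistVertexLabelling_thresholdOrientation [Finite α] [Finite β] [OrderBot α]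
    [Nontrivial α] {t : β → α} (ht : ∀ a, ¬ IsMax a → a ∈ Set.range t) {r : ℕ}
    {lab : α ⊕ β → Fin r} (hlab : Function.Injective fun b ↦ (t b, lab (.inr b))) :
    IsDistVertexLabelling (thresholdOrientation t) r lab := by
  intro φ hφ hφlab
  have bot_mem : ⊥ ∈ Set.range t := ht ⊥ not_isMax_bot
  have maps_left : Set.MapsTo φ (Set.range Sum.inl) (Set.range Sum.inl) := by
    rintro _ ⟨a, rfl⟩
    exact (Sum.isLeft_iff.1 (isLeft_apply_of_isAutom_thresholdOrientation bot_mem hφ (.inl a))).imp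
      fun _ ↦ Eq.symm
  obtain ⟨⟨σ, τ⟩, rfl⟩ := Equiv.Perm.mem_sumCongrHom_range_of_perm_mapsTo_inl maps_left
  have le_iff (a : α) (b : β) : a ≤ t b ↔ σ a ≤ t (τ b) := hφ (.inl a) (.inr b)
  obtain rfl : σ = 1 := eq_one_of_le_threshold_iff ht le_iff
  have threshold_eq (b : β) : t (τ b) = t b := eq_of_forall_le_iff fun a ↦ (le_iff a b).symm
  have τ_eq : τ = 1 :=
    Equiv.ext fun b ↦ hlab (Prod.ext (threshold_eq b) (hφlab (.inr b)))
  rw [τ_eq]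
  exact map_one (Equiv.Perm.sumCongrHom α β)

end Threshold

theorem exists_surjective_and_injective_prodMk {k n r : ℕ} (hkn : k ≤ n) (hn : n ≤ r * k) :
    ∃ (f : Fin n → Fin k) (g : Fin n → Fin r),
      f.Surjective ∧ Function.Injective fun j ↦ (f j, g j) := by
  refine ⟨fun j ↦ (j.castLE hn).modNat, fun j ↦ (j.castLE hn).divNat, fun i ↦ ?_, ?_⟩
  · exact ⟨i.castLE hkn, Fin.ext (Nat.mod_eq_of_lt i.isLt)⟩
  · intro j j' h
    obtain ⟨mod_eq, div_eq⟩ := Prod.mk.inj h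
    exact Fin.castLE_injective hn
      (finProdFinEquiv.symm.injective (Prod.ext div_eq mod_eq))

theorem exists_orientation_labelling_colouring {k n r : ℕ} (hkn : k + 1 ≤ n)
    (hn : n ≤ r * (k + 1)) :
    ∃ A : Fin (k + 2) ⊕ Fin n → Fin (k + 2) ⊕ Fin n → Prop,
      IsOrientation (bipAdj (k + 2) n) A ∧
      (∃ lab, IsDistVertexLabelling A r lab) ∧
      ∃ lab, IsDistVertexLabelling A (1 + r) lab ∧
        ∀ u v, bipAdj (k + 2) n u v → lab u ≠ lab v := by
  obtain ⟨f, g, hf, hfg⟩ := exists_surjective_and_injective_prodMk hkn hn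
  let t (j : Fin n) : Fin (k + 2) := (f j).castSucc
  have ht (i : Fin (k + 2)) (hi : ¬ IsMax i) : i ∈ Set.range t := by
    obtain ⟨i, rfl⟩ := Fin.exists_castSucc_eq.2 (ne_top_of_lt (not_isMax_iff.1 hi).choose_spec)
    exact (hf i).imp fun _ ↦ congrArg Fin.castSucc
  have htg : Function.Injective fun j ↦ (t j, g j) :=
    ((Fin.castSucc_injective _).prodMap Function.injective_id).comp hfg
  have colour_ne (j : Fin n) : Fin.castAdd r (0 : Fin 1) ≠ (g j).natAdd 1 :=
    (Nat.lt_add_right _ one_pos).ne ∘ congrArg Fin.val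
  refine ⟨thresholdOrientation t, isOrientation_thresholdOrientation t,
    ⟨Sum.elim (fun _ ↦ g ⟨0, by lia⟩) g, isDistVertexLabelling_thresholdOrientation ht htg⟩,
    Sum.elim (fun _ ↦ Fin.castAdd r 0) (fun j ↦ (g j).natAdd 1),
    isDistVertexLabelling_thresholdOrientation ht
      ((Function.injective_id.prodMap (Fin.natAdd_injective _ _)).comp htg), ?_⟩
  rintro (_ | j) (_ | j') <;> simp [bipAdj, colour_ne, (colour_ne _).symm]

theorem unbalanced_complete_bipartite_no_rigid_upper_bounds_general (m n : ℕ)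
    (hm : 2 ≤ m) (hmn : m ≤ n + 1) :
    ∃ A : Fin m ⊕ Fin n → Fin m ⊕ Fin n → Prop,
      IsOrientation (bipAdj m n) A ∧
      (∃ lab, IsDistVertexLabelling A ((n + m - 2) / (m - 1)) lab) ∧
      ∃ lab, IsDistVertexLabelling A (1 + (n + m - 2) / (m - 1)) lab ∧
        ∀ u v, bipAdj m n u v → lab u ≠ lab v := by
  obtain ⟨k, rfl⟩ := Nat.exists_eq_add_of_le' hm
  have le_ceil_mul : n ≤ (n + k) / (k + 1) * (k + 1) := by
    have := Nat.lt_div_mul_add (a := n + k) k.succ_pos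
    lia
  exact exists_orientation_labelling_colouring (by lia) le_ceil_mul

/-- Let `2 ≤ m < n`, and suppose `K_{m,n}` admits no rigid orientation. Then some
orientation of `K_{m,n}` admits a distinguishing vertex-labelling with
`⌈n/(m-1)⌉ = (n + m - 2)/(m - 1)` labels, and some orientation of `K_{m,n}` admits a
distinguishing proper vertex-colouring with `1 + ⌈n/(m-1)⌉` colours. -/
theorem unbalanced_complete_bipartite_no_rigid_upper_bounds (m n : ℕ)
    (hm : 2 ≤ m) (hmn : m < n)
    (hnorigid : ∀ A : Sum (Fin m) (Fin n) → Sum (Fin m) (Fin n) → Prop,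
      IsOrientation (bipAdj m n) A → ¬ IsRigid A) :
    (∃ A : Sum (Fin m) (Fin n) → Sum (Fin m) (Fin n) → Prop,
      IsOrientation (bipAdj m n) A ∧
      ∃ lab : Sum (Fin m) (Fin n) → Fin ((n + m - 2) / (m - 1)),
        IsDistVertexLabelling A ((n + m - 2) / (m - 1)) lab) ∧
    (∃ A : Sum (Fin m) (Fin n) → Sum (Fin m) (Fin n) → Prop,
      IsOrientation (bipAdj m n) A ∧
      ∃ lab : Sum (Fin m) (Fin n) → Fin (1 + (n + m - 2) / (m - 1)),
        IsDistVertexLabelling A (1 + (n + m - 2) / (m - 1)) lab ∧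
        ∀ u v, bipAdj m n u v → lab u ≠ lab v) := by
  obtain ⟨A, hA, hlab, hcol⟩ :=
    unbalanced_complete_bipartite_no_rigid_upper_bounds_general m n hm (by lia)
  exact ⟨⟨A, hA, hlab⟩, A, hA, hcol⟩
end

section
/- The complete bipartite graph K_{2,4} admits no rigid orientation, while the complete bipartite graph K_{2,3} admits a rigid orientation. -/
/-!
An orientation of `K_{m,n}` amounts to the family of in-neighborhoods `N(y) ⊆ X` for `y ∈ Y`. If it
is rigid, these sets are distinct, since two vertices of `Y` with the same in-neighborhood could be
swapped. When `n ≥ 2 ^ m`, every subset of `X` then occurs exactly once, so any permutation of `X`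
permutes the in-neighborhoods and extends to an automorphism, which is absurd for `m ≥ 2`.

Conversely, when `n` is `m` or `m + 1`, the path `y₀, x₀, y₁, x₁, …` visits every vertex. Orienting
all edges along it makes reachability a linear order on a finite set. Every automorphism preserves
reachability, so it is the identity.
-/

open Function Relation

theorem IsAutom.transGen_s15 {V : Type*} {A : V → V → Prop} {φ : Equiv.Perm V} (h : IsAutom A φ) :
    IsAutom (TransGen A) φ := fun u v =>
  have hsymm : A ≤ (A on φ.symm) := fun a b hab => (h _ _).2 (by simpa using hab)
  ⟨TransGen.lift φ (fun a b => (h a b).1) u v, fun huv => by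
    simpa [onFun] using TransGen.lift φ.symm hsymm _ _ huv⟩

theorem isRigid_of_isWellOrder_transGen {V : Type*} (A : V → V → Prop)
    [IsWellOrder V (TransGen A)] : IsRigid A := fun φ hφ => by
  let e : TransGen A ≃r TransGen A := ⟨φ, (hφ.transGen_s15 _ _).symm⟩
  ext u
  exact e.toInitialSeg.eq (InitialSeg.refl _) u

theorem isOrientation_adj_and_lt {V α : Type*} [LinearOrder α] {Adj : V → V → Prop} {r : V → α}
    (hsymm : ∀ u v, Adj u v → Adj v u) (hr : ∀ u v, Adj u v → r u ≠ r v) :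
    IsOrientation Adj fun u v => Adj u v ∧ r u < r v := by
  refine ⟨fun u v huv hvu => huv.2.asymm hvu.2, fun u v => ⟨?_, fun huv => ?_⟩⟩
  · rintro (h | h)
    exacts [h.1, hsymm _ _ h.1]
  · exact (hr u v huv).lt_or_gt.imp (⟨huv, ·⟩) (⟨hsymm _ _ huv, ·⟩)

section Interlaced

variable {m n : ℕ}

/-- The ranking `y₀ < x₀ < y₁ < x₁ < ⋯` of the vertices of `K_{m,n}`, used to orient its edges. -/
def interlacedRank : Fin m ⊕ Fin n → ℕ
  | .inl i => 2 * i + 1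
  | .inr j => 2 * j

/-- The orientation of `K_{m,n}` in which every edge goes up in the interlaced ranking. -/
def interlacedOrientation (m n : ℕ) (u v : Fin m ⊕ Fin n) : Prop :=
  bipAdj m n u v ∧ interlacedRank u < interlacedRank v

theorem interlacedRank_injective : Injective (interlacedRank (m := m) (n := n)) := by
  rintro (i | i) (j | j) h <;> grind [interlacedRank]

theorem isOrientation_interlacedOrientation :
    IsOrientation (bipAdj m n) (interlacedOrientation m n) :=
  isOrientation_adj_and_lt (fun _ _ => Ne.symm) fun _ _ huv h =>
    huv (congrArg Sum.isLeft (interlacedRank_injective h))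

theorem transGen_interlacedOrientation (hmn : m ≤ n) (hnm : n ≤ m + 1) :
    TransGen (interlacedOrientation m n) = ((· < ·) on interlacedRank) := by
  ext u v
  refine ⟨fun h => ?_, fun h : interlacedRank u < interlacedRank v => ?_⟩
  · induction h with
    | single h => exact h.2
    | tail _ h ih => exact ih.trans h.2
  · rcases u with i | i <;> rcases v with j | j
    · have hlt : i < j := by grind [interlacedRank]
      let y : Fin n := ⟨j, by lia⟩
      have hiy : interlacedOrientation m n (.inl i) (.inr y) :=
        ⟨by simp [bipAdj], by grind [interlacedRank]⟩
      have hyj : interlacedOrientation m n (.inr y) (.inl j) :=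
        ⟨by simp [bipAdj], by grind [interlacedRank]⟩
      exact .tail (.single hiy) hyj
    · exact .single ⟨by simp [bipAdj], h⟩
    · exact .single ⟨by simp [bipAdj], h⟩
    · have hlt : i < j := by grind [interlacedRank]
      let x : Fin m := ⟨i, by lia⟩
      have hix : interlacedOrientation m n (.inr i) (.inl x) :=
        ⟨by simp [bipAdj], by grind [interlacedRank]⟩
      have hxj : interlacedOrientation m n (.inl x) (.inr j) :=
        ⟨by simp [bipAdj], by grind [interlacedRank]⟩
      exact .tail (.single hix) hxj

theorem isRigid_interlacedOrientation (hmn : m ≤ n) (hnm : n ≤ m + 1) :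
    IsRigid (interlacedOrientation m n) := by
  have : IsWellOrder _ (TransGen (interlacedOrientation m n)) :=
    transGen_interlacedOrientation hmn hnm ▸ interlacedRank_injective.isWellOrder _
  exact isRigid_of_isWellOrder_transGen _

end Interlaced

section InNeighbors

variable {m n : ℕ} {A : Fin m ⊕ Fin n → Fin m ⊕ Fin n → Prop}

/-- The in-neighborhood of `y_j`, as a set of indices in `X`; these sets determine an orientation of
`K_{m,n}`. -/
def inNeighbors (A : Fin m ⊕ Fin n → Fin m ⊕ Fin n → Prop) (j : Fin n) : Set (Fin m) :=
  {i | A (.inl i) (.inr j)}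

theorem IsOrientation.inr_inl_iff (hA : IsOrientation (bipAdj m n) A) (i : Fin m) (j : Fin n) :
    A (.inr j) (.inl i) ↔ i ∉ inNeighbors A j :=
  ⟨hA.1 _ _, ((hA.2 _ _).2 (by simp [bipAdj])).resolve_right⟩

theorem IsOrientation.isAutom_sumCongr (hA : IsOrientation (bipAdj m n) A)
    {σ : Equiv.Perm (Fin m)} {τ : Equiv.Perm (Fin n)}
    (h : ∀ j, inNeighbors A (τ j) = σ '' inNeighbors A j) : IsAutom A (σ.sumCongr τ) := by
  have hmem (i j) : σ i ∈ inNeighbors A (τ j) ↔ i ∈ inNeighbors A j := by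
    rw [h, σ.injective.mem_set_image]
  have hside {u v} (huv : u.isLeft = v.isLeft) : ¬ A u v := fun hAuv =>
    (hA.2 u v).1 (.inl hAuv) huv
  rintro (i | i) (j | j)
  · exact iff_of_false (hside rfl) (hside rfl)
  · exact (hmem i j).symm
  · simpa [hA.inr_inl_iff] using (hmem j i).not.symm
  · exact iff_of_false (hside rfl) (hside rfl)

theorem IsRigid.eq_one_of_inNeighbors_eq_image (hr : IsRigid A) (hA : IsOrientation (bipAdj m n) A)
    {σ : Equiv.Perm (Fin m)} {τ : Equiv.Perm (Fin n)}
    (h : ∀ j, inNeighbors A (τ j) = σ '' inNeighbors A j) : σ = 1 ∧ τ = 1 :=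
  Prod.mk.inj <| Equiv.Perm.sumCongrHom_injective (a₁ := (σ, τ)) (a₂ := 1) <|
    (hr _ (hA.isAutom_sumCongr h)).trans (map_one _).symm

theorem IsRigid.inNeighbors_injective (hr : IsRigid A) (hA : IsOrientation (bipAdj m n) A) :
    Injective (inNeighbors A) := fun a b hab => by
  refine Equiv.swap_eq_one_iff.1 (hr.eq_one_of_inNeighbors_eq_image hA (σ := 1) fun j => ?_).2
  rcases eq_or_ne j a with rfl | hja
  · simp [hab]
  rcases eq_or_ne j b with rfl | hjb
  · simp [hab]
  · simp [Equiv.swap_apply_of_ne_of_ne hja hjb]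

theorem IsRigid.le_one_of_inNeighbors_bijective (hr : IsRigid A)
    (hA : IsOrientation (bipAdj m n) A) (hbij : Bijective (inNeighbors A)) : m ≤ 1 := by
  let e := Equiv.ofBijective _ hbij
  have perm_eq_one (σ : Equiv.Perm (Fin m)) : σ = 1 :=
    (hr.eq_one_of_inNeighbors_eq_image hA (τ := (e.trans (Equiv.Set.congr σ)).trans e.symm) fun j =>
      e.apply_symm_apply _).1
  by_contra! hm
  have := Fin.nontrivial_iff_two_le.2 hm
  obtain ⟨a, b, hab⟩ := exists_pair_ne (Fin m)
  exact hab (Equiv.swap_eq_one_iff.1 (perm_eq_one (Equiv.swap a b)))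

theorem IsOrientation.not_isRigid_of_two_pow_le (hA : IsOrientation (bipAdj m n) A) (hm : 2 ≤ m)
    (hn : 2 ^ m ≤ n) : ¬ IsRigid A := fun hr => by
  have hbij : Bijective (inNeighbors A) :=
    (hr.inNeighbors_injective hA).bijective_of_nat_card_le (by simpa using hn)
  have := hr.le_one_of_inNeighbors_bijective hA hbij
  lia

end InNeighbors

theorem K24_no_rigid_K23_rigid_general :
    (∀ m n : ℕ, 2 ≤ m → 2 ^ m ≤ n → ∀ A : Fin m ⊕ Fin n → Fin m ⊕ Fin n → Prop,
      IsOrientation (bipAdj m n) A → ¬ IsRigid A) ∧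
    (∀ m n : ℕ, m ≤ n → n ≤ m + 1 → ∃ A : Fin m ⊕ Fin n → Fin m ⊕ Fin n → Prop,
      IsOrientation (bipAdj m n) A ∧ IsRigid A) :=
  ⟨fun _ _ hm hn _ hA => hA.not_isRigid_of_two_pow_le hm hn, fun m n hmn hnm =>
    ⟨interlacedOrientation m n, isOrientation_interlacedOrientation,
      isRigid_interlacedOrientation hmn hnm⟩⟩

/-- `K_{2,4}` admits no rigid orientation, while `K_{2,3}` admits a rigid
orientation. -/
theorem K24_no_rigid_K23_rigid :
    (∀ A : Sum (Fin 2) (Fin 4) → Sum (Fin 2) (Fin 4) → Prop,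
      IsOrientation (bipAdj 2 4) A → ¬ IsRigid A) ∧
    (∃ A : Sum (Fin 2) (Fin 3) → Sum (Fin 2) (Fin 3) → Prop,
      IsOrientation (bipAdj 2 3) A ∧ IsRigid A) :=
  ⟨K24_no_rigid_K23_rigid_general.1 2 4 le_rfl le_rfl,
    K24_no_rigid_K23_rigid_general.2 2 3 (by simp) le_rfl⟩
end

section
/- For every integer n with 4 ≤ n ≤ 6, the complete bipartite graph K_{3,n} admits a rigid orientation; and for every integer n with 5 ≤ n ≤ 13, the complete bipartite graph K_{4,n} admits a rigid orientation. -/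
/-!
Orient `x → y` when `x` lies in a set `F y`, and `y → x` otherwise. When `Y` is larger than `X`, an
automorphism cannot exchange the two sides. If moreover the `x`s belong to pairwise different
numbers of sets `F y`, it fixes `X` pointwise, and if the sets are distinct it then fixes `Y`.

So it suffices to find, for each `n` with `m < n ≤ 2 ^ m - m + 1`, a family of `n` subsets of an
`m`-element set in which all elements have different degrees. The full flag `{0}, {0, 1}, …` has
this property, which is preserved by adding further complementary pairs `A, Aᶜ`, since each of them
raises every degree by one, and by adding `∅`, which adjusts the parity of the size.
-/

open Finset Function
open scoped FinsetFamily

section Rigidity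

variable {V α β : Type*}

theorem IsAutom.adj_iff {Adj A : V → V → Prop} {φ : Equiv.Perm V} (hφ : IsAutom A φ)
    (hA : IsOrientation Adj A) (u v : V) : Adj u v ↔ Adj (φ u) (φ v) := by
  rw [← hA.2 u v, ← hA.2 (φ u) (φ v), ← hφ u v, ← hφ v u]

/-- The orientation of the complete bipartite graph with parts `α` and `β` in which the edge
between `x : α` and `y : β` points towards `y` exactly when `r x y` holds. -/
def orientationOfRel (r : α → β → Prop) : α ⊕ β → α ⊕ β → Prop
  | .inl x, .inr y => r x y
  | .inr y, .inl x => ¬ r x y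
  | _, _ => False

theorem isOrientation_orientationOfRel (r : α → β → Prop) :
    IsOrientation (fun u v : α ⊕ β => u.isLeft ≠ v.isLeft) (orientationOfRel r) := by
  constructor <;> rintro (x | y) (x' | y') <;> grind [orientationOfRel]

theorem exists_eq_sumCongr_of_isLeft_ne_iff [Finite α] [Finite β]
    (hcard : Nat.card α < Nat.card β) (φ : Equiv.Perm (α ⊕ β))
    (hφ : ∀ u v, u.isLeft ≠ v.isLeft ↔ (φ u).isLeft ≠ (φ v).isLeft) :
    ∃ (σ : Equiv.Perm α) (τ : Equiv.Perm β), φ = σ.sumCongr τ := by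
  obtain ⟨y, hy⟩ : ∃ y, (φ (.inr y)).isLeft = false := by
    by_contra! hleft
    choose g hg using fun y => Sum.isLeft_iff.1 (Bool.eq_true_of_not_eq_false (hleft y))
    have hg_inj : Injective g := fun y y' h =>
      Sum.inr_injective (φ.injective (by rw [hg, hg, h]))
    exact hcard.not_ge (Nat.card_le_card_of_injective g hg_inj)
  have hmaps : Set.MapsTo φ (Set.range Sum.inl) (Set.range Sum.inl) := by
    rintro _ ⟨x, rfl⟩
    have hx := (hφ (.inl x) (.inr y)).1 (by simp)
    rw [hy, Bool.ne_false_iff] at hx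
    obtain ⟨x', hx'⟩ := Sum.isLeft_iff.1 hx
    exact ⟨x', hx'.symm⟩
  obtain ⟨⟨σ, τ⟩, h⟩ := Equiv.Perm.mem_sumCongrHom_range_of_perm_mapsTo_inl hmaps
  exact ⟨σ, τ, h.symm⟩

theorem isRigid_orientationOfRel [Finite α] [Finite β] (hcard : Nat.card α < Nat.card β)
    {r : α → β → Prop} (hdeg : Injective fun x => {y | r x y}.ncard)
    (hcol : Injective fun y => {x | r x y}) : IsRigid (orientationOfRel r) := by
  intro φ hφ
  obtain ⟨σ, τ, rfl⟩ := exists_eq_sumCongr_of_isLeft_ne_iff hcard φ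
    (hφ.adj_iff (isOrientation_orientationOfRel r))
  have hr : ∀ x y, r x y ↔ r (σ x) (τ y) := fun x y => hφ (.inl x) (.inr y)
  have hncard : ∀ x, {y | r (σ x) y}.ncard = {y | r x y}.ncard := fun x => by
    have hpreimage : {y | r x y} = τ ⁻¹' {y | r (σ x) y} := Set.ext (hr x)
    rw [hpreimage, Set.ncard_preimage_of_injective_subset_range τ.injective (by simp)]
  have hσ : ∀ x, σ x = x := fun x => hdeg (hncard x)
  have hτ : ∀ y, τ y = y := fun y => hcol <| by
    ext x
    simpa [hσ] using (hr x y).symm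
  ext (x | y) <;> simp [hσ, hτ]

end Rigidity

section FamilyDegree

variable {α : Type*} [DecidableEq α]

/-- The degree of `x` in a set family: the number of members containing `x`. -/
def familyDegree (F : Finset (Finset α)) (x : α) : ℕ := #{A ∈ F | x ∈ A}

theorem familyDegree_insert_empty (F : Finset (Finset α)) (x : α) :
    familyDegree (insert ∅ F) x = familyDegree F x := by
  simp [familyDegree, filter_insert]

theorem familyDegree_union {F G : Finset (Finset α)} (h : Disjoint F G) (x : α) :
    familyDegree (F ∪ G) x = familyDegree F x + familyDegree G x := by
  rw [familyDegree, filter_union, card_union_of_disjoint (disjoint_filter_filter h)]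
  rfl

variable [Fintype α]

theorem familyDegree_add_familyDegree_compls (F : Finset (Finset α)) (x : α) :
    familyDegree F x + familyDegree Fᶜˢ x = #F := by
  have hcompls : ({A ∈ Fᶜˢ | x ∈ A} : Finset (Finset α)) = ({A ∈ F | x ∉ A})ᶜˢ := by
    ext A
    simp
  rw [familyDegree, familyDegree, hcompls, card_compls, card_filter_add_card_filter_not]

theorem two_mul_familyDegree_univ (x : α) :
    2 * familyDegree (univ : Finset (Finset α)) x = 2 ^ Fintype.card α := by
  have h := familyDegree_add_familyDegree_compls univ x
  rwa [compls_univ, ← two_mul, card_univ, Fintype.card_finset] at h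

theorem disjoint_compls_of_common_mem {F G : Finset (Finset α)} {a : α} (hF : ∀ A ∈ F, a ∈ A)
    (hG : ∀ A ∈ G, a ∈ A) : Disjoint F Gᶜˢ :=
  disjoint_left.2 fun A hAF hAG => mem_compl.1 (hG _ (mem_compls.1 hAG)) (hF A hAF)

end FamilyDegree

theorem exists_disjoint_family_common_mem {α : Type*} [Fintype α] {F : Finset (Finset α)} {a : α}
    {j : ℕ} (hj : 2 * (#F + j) ≤ 2 ^ Fintype.card α) :
    ∃ B : Finset (Finset α), #B = j ∧ (∀ A ∈ B, a ∈ A) ∧ Disjoint F B := by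
  classical
  have hcard : j ≤ #(({A | a ∈ A} : Finset (Finset α)) \ F) := by
    have hsdiff := le_card_sdiff F ({A | a ∈ A} : Finset (Finset α))
    have hdouble := two_mul_familyDegree_univ a
    rw [familyDegree] at hdouble
    lia
  obtain ⟨B, hB, rfl⟩ := exists_subset_card_eq hcard
  refine ⟨B, rfl, fun A hA => ?_, disjoint_sdiff.mono_right hB⟩
  exact (mem_filter.1 (mem_sdiff.1 (hB hA)).1).2

theorem exists_family_add_compl_pairs {α : Type*} [DecidableEq α] [Fintype α]
    {F : Finset (Finset α)} {a : α} {j : ℕ} (hF : ∀ A ∈ F, a ∈ A) (huniv : univ ∈ F)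
    (hdeg : Injective (familyDegree F)) (hj : 2 * (#F + j) ≤ 2 ^ Fintype.card α) :
    ∃ G : Finset (Finset α), #G = #F + 2 * j ∧ ∅ ∉ G ∧ Injective (familyDegree G) := by
  -- Requiring `a ∈ A` selects one member from each complementary pair `A, Aᶜ`.
  obtain ⟨B, rfl, hB, hFB⟩ := exists_disjoint_family_common_mem (a := a) hj
  have hBB : Disjoint B Bᶜˢ := disjoint_compls_of_common_mem hB hB
  have hFBB : Disjoint F (B ∪ Bᶜˢ) :=
    disjoint_union_right.2 ⟨hFB, disjoint_compls_of_common_mem hF hB⟩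
  refine ⟨F ∪ (B ∪ Bᶜˢ), ?_, fun hempty => ?_, fun x y hxy => hdeg ?_⟩
  · rw [card_union_of_disjoint hFBB, card_union_of_disjoint hBB, card_compls, two_mul]
  · have huniv_notMem : univ ∉ B := disjoint_left.1 hFB huniv
    have hempty_F : ∅ ∉ F := fun h => notMem_empty a (hF ∅ h)
    have hempty_B : ∅ ∉ B := fun h => notMem_empty a (hB ∅ h)
    simp [huniv_notMem, hempty_F, hempty_B] at hempty
  · simpa only [familyDegree_union hFBB, familyDegree_union hBB,
      familyDegree_add_familyDegree_compls, Nat.add_right_cancel_iff] using hxy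

section InitialSegments

theorem finset_Iic_injective {α : Type*} [PartialOrder α] [LocallyFiniteOrderBot α] :
    Injective (Iic : α → Finset α) := fun _ _ h =>
  (Iic_subset_Iic.1 h.le).antisymm (Iic_subset_Iic.1 h.ge)

variable {α : Type*} [Fintype α] [LinearOrder α] [LocallyFiniteOrderBot α]

variable (α) in
/-- The family of initial segments `{y | y ≤ x}` of a finite linear order: a full flag of
nonempty subsets, to which complementary pairs are added to reach a given size. -/
def initialSegments : Finset (Finset α) := univ.image Iic

theorem card_initialSegments : #(initialSegments α) = Fintype.card α := by
  rw [initialSegments, card_image_of_injective _ finset_Iic_injective, card_univ]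

theorem familyDegree_initialSegments [LocallyFiniteOrderTop α] (x : α) :
    familyDegree (initialSegments α) x = #(Ici x) := by
  rw [familyDegree, initialSegments, filter_image, card_image_of_injective _ finset_Iic_injective]
  congr 1
  ext
  simp

theorem familyDegree_initialSegments_strictAnti [LocallyFiniteOrderTop α] :
    StrictAnti (familyDegree (initialSegments α)) := fun x y hxy => by
  simpa only [familyDegree_initialSegments] using card_lt_card (Ici_ssubset_Ici.2 hxy)

theorem bot_mem_of_mem_initialSegments [OrderBot α] {A : Finset α}
    (hA : A ∈ initialSegments α) : ⊥ ∈ A := by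
  obtain ⟨x, -, rfl⟩ := mem_image.1 hA
  exact mem_Iic.2 bot_le

theorem univ_mem_initialSegments [OrderTop α] : univ ∈ initialSegments α :=
  mem_image.2 ⟨⊤, mem_univ _, by ext; simp⟩

theorem exists_family_familyDegree_injective [LocallyFiniteOrderTop α] [BoundedOrder α] {n : ℕ}
    (hlower : Fintype.card α ≤ n) (hupper : n + Fintype.card α ≤ 2 ^ Fintype.card α + 1) :
    ∃ F : Finset (Finset α), #F = n ∧ Injective (familyDegree F) := by
  have hextend : ∀ j, 2 * (Fintype.card α + j) ≤ 2 ^ Fintype.card α →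
      ∃ G : Finset (Finset α),
        #G = Fintype.card α + 2 * j ∧ ∅ ∉ G ∧ Injective (familyDegree G) := by
    simpa only [card_initialSegments] using fun j => exists_family_add_compl_pairs (j := j)
      (fun _ => bot_mem_of_mem_initialSegments) univ_mem_initialSegments
      (familyDegree_initialSegments_strictAnti (α := α)).injective
  obtain ⟨j, hj | hj⟩ := Nat.even_or_odd' (n - Fintype.card α)
  · have heven : Even (2 ^ Fintype.card α) := even_two.pow_of_ne_zero Fintype.card_ne_zero
    obtain ⟨G, hG, -, hdeg⟩ := hextend j (by grind)
    exact ⟨G, by lia, hdeg⟩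
  · obtain ⟨G, hG, hempty, hdeg⟩ := hextend j (by lia)
    refine ⟨insert ∅ G, by rw [card_insert_of_notMem hempty]; lia, ?_⟩
    simpa only [Injective, familyDegree_insert_empty] using hdeg

end InitialSegments

theorem exists_rigid_orientation_of_family {m n : ℕ} {F : Finset (Finset (Fin m))} (hF : #F = n)
    (hmn : m < n) (hdeg : Injective (familyDegree F)) :
    ∃ A : Fin m ⊕ Fin n → Fin m ⊕ Fin n → Prop, IsOrientation (bipAdj m n) A ∧ IsRigid A := by
  let c (y : Fin n) : Finset (Fin m) := (F.equivFinOfCardEq hF).symm y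
  have hc : Injective c := Subtype.val_injective.comp (Equiv.injective _)
  have hrange : Set.range c = F := by
    rw [← Subtype.range_coe (s := (F : Set (Finset (Fin m))))]
    exact (Equiv.surjective _).range_comp _
  have hdegree : ∀ x, {y | x ∈ c y}.ncard = familyDegree F x := fun x => by
    have himage : c '' {y | x ∈ c y} = {A | A ∈ F ∧ x ∈ A} :=
      (Set.image_preimage_eq_range_inter (t := {A | x ∈ A})).trans (by rw [hrange]; rfl)
    rw [familyDegree, ← Set.ncard_coe_finset, coe_filter, ← himage,
      Set.ncard_image_of_injective _ hc]
  refine ⟨orientationOfRel (· ∈ c ·), isOrientation_orientationOfRel _, ?_⟩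
  refine isRigid_orientationOfRel (by simpa using hmn) ?_ ?_
  · simpa only [hdegree] using hdeg
  · exact fun y y' h => hc (Finset.ext fun x => Set.ext_iff.1 h x)

theorem K3n_K4n_rigid_orientations_general {m n : ℕ} (hm : 0 < m) (hmn : m < n)
    (hn : n + m ≤ 2 ^ m + 1) :
    ∃ A : Fin m ⊕ Fin n → Fin m ⊕ Fin n → Prop, IsOrientation (bipAdj m n) A ∧ IsRigid A := by
  have : NeZero m := ⟨hm.ne'⟩
  obtain ⟨F, hF, hdeg⟩ :=
    exists_family_familyDegree_injective (α := Fin m) (by simpa using hmn.le) (by simpa using hn)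
  exact exists_rigid_orientation_of_family hF hmn hdeg

/-- For every `4 ≤ n ≤ 6`, `K_{3,n}` admits a rigid orientation; and for every
`5 ≤ n ≤ 13`, `K_{4,n}` admits a rigid orientation. -/
theorem K3n_K4n_rigid_orientations :
    (∀ n : ℕ, 4 ≤ n → n ≤ 6 →
      ∃ A : Sum (Fin 3) (Fin n) → Sum (Fin 3) (Fin n) → Prop,
        IsOrientation (bipAdj 3 n) A ∧ IsRigid A) ∧
    (∀ n : ℕ, 5 ≤ n → n ≤ 13 →
      ∃ A : Sum (Fin 4) (Fin n) → Sum (Fin 4) (Fin n) → Prop,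
        IsOrientation (bipAdj 4 n) A ∧ IsRigid A) :=
  ⟨fun n _ _ => K3n_K4n_rigid_orientations_general (by lia) (by lia) (by lia),
    fun n _ _ => K3n_K4n_rigid_orientations_general (by lia) (by lia) (by lia)⟩
end

section
/- For all integers m and k with m ≥ 5 and ⌈m/2⌉ ≤ k < 2^m − m, the complete bipartite graph K_{m, 2^m − k} admits a rigid orientation. -/
/-!
An orientation of `K_{m,n}` amounts to a list of `n` subsets of `X`, the in-neighbourhoods of the
vertices of `Y`. If these are distinct and no nontrivial permutation of `X` preserves their family,
then the only automorphism keeping `X` and `Y` apart is the identity. Rigid families are closed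
under complementation in the power set, so one may assume `n ≤ 2 ^ (m - 1)`.

* For `⌈m/2⌉ ≤ n ≤ m`, start from `⌈m/2⌉` sets of pairwise different sizes at least two which
  separate the points, and add singletons.
* For `m ≤ n ≤ 2 ^ (m - 1)`, start from the `m` sets `{0}, {0, 1}, {1, 2}, …, {m - 2, m - 1}` and
  add sets of sizes other than one and two.

Added sets do no harm because permutations preserve sizes. An automorphism exchanging `X` and `Y`
can exist only for `n = m`, where it is excluded by taking the `m` sets of the second kind alone.
-/

open Finset

variable {α β γ δ : Type*}

section RigidFamily

/-- A family of subsets of `α` preserved by no nontrivial permutation of `α`. As `F` is finite,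
asking that `σ` map `F` into itself is the same as asking that it map `F` onto itself. -/
def IsRigidFamily (F : Finset (Finset α)) : Prop :=
  ∀ σ : Equiv.Perm α, (∀ A ∈ F, A.map σ.toEmbedding ∈ F) → σ = 1

theorem IsRigidFamily.compl [Fintype α] [DecidableEq α] {F : Finset (Finset α)}
    (hF : IsRigidFamily F) : IsRigidFamily Fᶜ := by
  intro σ hσ
  refine inv_eq_one.mp (hF σ⁻¹ fun A hA ↦ ?_)
  by_contra hA'
  have hmap : (A.map (σ⁻¹).toEmbedding).map σ.toEmbedding = A := by
    ext x
    rw [mem_map_equiv, mem_map_equiv, Equiv.Perm.inv_def, Equiv.symm_symm, Equiv.apply_symm_apply]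
  exact mem_compl.mp (hmap ▸ hσ _ (mem_compl.mpr hA')) hA

theorem isRigidFamily_of_filter_card {F : Finset (Finset α)} (P : ℕ → Prop) [DecidablePred P]
    (hF : IsRigidFamily {A ∈ F | P #A}) : IsRigidFamily F := by
  refine fun σ hσ ↦ hF σ fun A hA ↦ ?_
  rw [mem_filter] at hA ⊢
  exact ⟨hσ A hA.1, by simpa only [card_map] using hA.2⟩

theorem IsRigidFamily.exists_card_eq [Fintype α] {F : Finset (Finset α)}
    (hF : IsRigidFamily F) (P : ℕ → Prop) [DecidablePred P] (hP : ∀ A ∈ F, P #A) {k : ℕ}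
    (hFk : #F ≤ k) (hk : k ≤ #F + #{A : Finset α | ¬ P #A}) :
    ∃ G : Finset (Finset α), #G = k ∧ IsRigidFamily G := by
  classical
  obtain ⟨E, hE, hEcard⟩ :=
    exists_subset_card_eq (s := {A : Finset α | ¬ P #A}) (n := k - #F) (by omega)
  have hE' : ∀ A ∈ E, ¬ P #A := fun A hA ↦ (mem_filter.mp (hE hA)).2
  have hdisj : Disjoint F E := disjoint_left.mpr fun A hAF hAE ↦ hE' A hAE (hP A hAF)
  refine ⟨F ∪ E, by rw [card_union_of_disjoint hdisj]; omega, isRigidFamily_of_filter_card P ?_⟩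
  rwa [filter_union, filter_true_of_mem hP, filter_false_of_mem hE', union_empty]

theorem isRigidFamily_of_injOn_card {F : Finset (Finset α)}
    (hcard : Set.InjOn (card : Finset α → ℕ) F)
    (hsep : ∀ x y : α, (∀ A ∈ F, x ∈ A ↔ y ∈ A) → x = y) : IsRigidFamily F := by
  intro σ hσ
  have hfix : ∀ A ∈ F, A.map σ.toEmbedding = A := fun A hA ↦
    hcard (hσ A hA) hA (card_map _)
  refine Equiv.ext fun x ↦ hsep _ _ fun A hA ↦ ?_
  conv_lhs => rw [← hfix A hA]
  simp

theorem two_pow_card_le_two_mul_card_filter_not [Fintype α] [DecidableEq α]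
    (p : Finset α → Prop) [DecidablePred p] (hp : ∀ A, p A → ¬ p Aᶜ) :
    2 ^ Fintype.card α ≤ 2 * #{A | ¬ p A} := by
  have hle : #{A | p A} ≤ #{A | ¬ p A} :=
    card_le_card_of_injOn compl (by simpa [Set.MapsTo] using hp) compl_injective.injOn
  have hadd := card_filter_add_card_filter_not (s := univ) fun A ↦ p A
  rw [card_univ, Fintype.card_finset] at hadd
  omega

end RigidFamily

section PathFamily

variable {m : ℕ}

/-- The `i`-th edge `{i - 1, i}` of the path `0, 1, …, m - 1`, degenerating to `{0}` for `i = 0`;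
the degenerate edge tells the two ends of the path apart. -/
def pathEdge (i : Fin m) : Finset (Fin m) :=
  {x | x = i ∨ x.val + 1 = i}

theorem mem_pathEdge {i x : Fin m} : x ∈ pathEdge i ↔ x.val = i ∨ x.val + 1 = i := by
  simp [pathEdge, Fin.ext_iff]

theorem pathEdge_injective : Function.Injective (pathEdge : Fin m → Finset (Fin m)) := by
  intro i j hij
  have hi : i ∈ pathEdge j := hij ▸ mem_pathEdge.mpr (.inl rfl)
  have hj : j ∈ pathEdge i := hij ▸ mem_pathEdge.mpr (.inl rfl)
  rw [mem_pathEdge] at hi hj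
  omega

theorem card_pathEdge_pos (i : Fin m) : 0 < #(pathEdge i) :=
  card_pos.mpr ⟨i, mem_pathEdge.mpr (.inl rfl)⟩

theorem card_pathEdge_le_two (i : Fin m) : #(pathEdge i) ≤ 2 := by
  have hsub : pathEdge i ⊆ {i, ⟨i - 1, by omega⟩} := by
    intro x hx
    rw [mem_pathEdge] at hx
    simp only [mem_insert, mem_singleton, Fin.ext_iff]
    omega
  exact (card_le_card hsub).trans card_le_two

theorem apply_eq_self_of_injective_of_forall_le [PartialOrder α] [WellFoundedLT α] {f : α → α}
    (hf : Function.Injective f) (hle : ∀ a, f a ≤ a) (a : α) : f a = a := by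
  induction a using WellFoundedLT.induction with
  | ind a ih => exact (hle a).eq_of_not_lt fun hlt ↦ hlt.ne (hf (ih _ hlt))

theorem isRigidFamily_image_pathEdge : IsRigidFamily (univ.image (pathEdge (m := m))) := by
  intro σ hσ
  have hedge (i : Fin m) : ∃ j, pathEdge j = (pathEdge i).map σ.toEmbedding := by
    simpa using hσ (pathEdge i) (mem_image_of_mem _ (mem_univ i))
  have hle : ∀ (i : ℕ) (hi : i < m), (σ ⟨i, hi⟩).val ≤ i := by
    intro i
    induction i with
    | zero =>
      intro hi
      obtain ⟨j, hj⟩ := hedge ⟨0, hi⟩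
      have hmem {y : Fin m} (hy : y ∈ pathEdge j) : y = σ ⟨0, hi⟩ := by
        obtain ⟨x, hx, rfl⟩ := mem_map.mp (hj ▸ hy)
        have hx₀ : x = ⟨0, hi⟩ := by simpa [mem_pathEdge, Fin.ext_iff] using hx
        rw [hx₀, Equiv.coe_toEmbedding]
      have hj₀ : j.val = 0 := by
        by_contra hj₀
        have hpred : (⟨j - 1, by omega⟩ : Fin m) ∈ pathEdge j :=
          mem_pathEdge.mpr (.inr (by simp only; omega))
        have := (hmem hpred).trans (hmem (mem_pathEdge.mpr (.inl rfl))).symm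
        simp only [Fin.ext_iff] at this
        omega
      rw [← hmem (mem_pathEdge.mpr (.inl rfl)), hj₀]
    | succ i ih =>
      intro hi
      obtain ⟨j, hj⟩ := hedge ⟨i + 1, hi⟩
      have hmem {x : Fin m} (hx : x ∈ pathEdge ⟨i + 1, hi⟩) : σ x ∈ pathEdge j := by
        simpa [hj] using hx
      have hprev := mem_pathEdge.mp (hmem (x := ⟨i, by omega⟩) (mem_pathEdge.mpr (.inr rfl)))
      have hnext := mem_pathEdge.mp (hmem (x := ⟨i + 1, hi⟩) (mem_pathEdge.mpr (.inl rfl)))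
      have hih := ih (by omega)
      -- `σ (i + 1) ≤ j ≤ σ i + 1`
      omega
  exact Equiv.ext fun i ↦
    apply_eq_self_of_injective_of_forall_le σ.injective (fun i ↦ hle i i.isLt) i

theorem not_swap_pathEdge (hm : 4 ≤ m) (f g : Equiv.Perm (Fin m)) :
    ¬ ∀ x y, x ∈ pathEdge y ↔ g y ∉ pathEdge (f x) := by
  -- Since `pathEdge 0 = {0}`, the point `g 0` would lie in `pathEdge (f x)` for every `x ≠ 0`,
  -- but a point lies in at most two edges.
  intro h
  have hadj (x : Fin m) (hx : x.val ≠ 0) :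
      (g ⟨0, by omega⟩).val = f x ∨ (g ⟨0, by omega⟩).val + 1 = f x := by
    rw [← mem_pathEdge]
    by_contra hg
    have := mem_pathEdge.mp ((h x _).mpr hg)
    simp only at this
    omega
  have h₁ := hadj ⟨1, by omega⟩ (by simp)
  have h₂ := hadj ⟨2, by omega⟩ (by simp)
  have h₃ := hadj ⟨3, by omega⟩ (by simp)
  have hne₁₂ : (f ⟨1, by omega⟩).val ≠ f ⟨2, by omega⟩ := by simp [Fin.val_inj]
  have hne₁₃ : (f ⟨1, by omega⟩).val ≠ f ⟨3, by omega⟩ := by simp [Fin.val_inj]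
  have hne₂₃ : (f ⟨2, by omega⟩).val ≠ f ⟨3, by omega⟩ := by simp [Fin.val_inj]
  omega

theorem exists_isRigidFamily_card_eq_of_le {k : ℕ} (hm : 5 ≤ m) (hmk : m ≤ k)
    (hk : 2 * k ≤ 2 ^ m) : ∃ F : Finset (Finset (Fin m)), #F = k ∧ IsRigidFamily F := by
  have hcard : #(univ.image (pathEdge (m := m))) = m := by
    rw [card_image_of_injective _ pathEdge_injective, card_univ, Fintype.card_fin]
  have hhalf := two_pow_card_le_two_mul_card_filter_not
    (fun A : Finset (Fin m) ↦ #A = 1 ∨ #A = 2) fun A hA ↦ by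
      rw [card_compl, Fintype.card_fin]
      omega
  rw [Fintype.card_fin] at hhalf
  refine isRigidFamily_image_pathEdge.exists_card_eq (fun n ↦ n = 1 ∨ n = 2)
    (forall_mem_image.mpr fun i _ ↦ ?_) (by omega) (by omega)
  have := card_pathEdge_pos i
  have := card_pathEdge_le_two i
  omega

end PathFamily

section ChainFamily

variable {m l : ℕ}

/-- The `i`-th of `l` sets separating the points of `Fin m`, where `m` is `2 * l - 1` or `2 * l`.
The indices of the sets containing `x` are `0, …, x` if `x < l`, just `x - l + 1` if
`l ≤ x < 2 * l - 2`, both `0` and `l - 1` if `x = 2 * l - 2`, and none if `x = 2 * l - 1`.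
Without the exceptional point `2 * l - 2` in the set with index `0`, that point would only lie in
the last set, and the first two sets would have the same size. -/
def chainSet (m : ℕ) (i : Fin l) : Finset (Fin m) :=
  {x | (i.val ≤ x ∧ x < l) ∨ x + 1 = l + i.val ∨ (i.val = 0 ∧ x + 2 = 2 * l)}

theorem mem_chainSet {i : Fin l} {x : Fin m} : x ∈ chainSet m i ↔
    (i.val ≤ x ∧ x < l) ∨ x + 1 = l + i.val ∨ (i.val = 0 ∧ x + 2 = 2 * l) := by
  simp [chainSet]

theorem card_chainSet (hl : 2 ≤ l) (hlm : 2 * l ≤ m + 1) (i : Fin l) :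
    #(chainSet m i) = l + 1 - i := by
  have hmap : (chainSet m i).map Fin.valEmbedding
      = insert (if i.val = 0 then 2 * l - 2 else l + i - 1) (Ico i.val l) := by
    ext x
    simp only [mem_map, mem_chainSet, Fin.valEmbedding_apply, mem_insert, mem_Ico]
    constructor
    · rintro ⟨y, hy, rfl⟩
      split_ifs <;> omega
    · intro hx
      have hxm : x < m := by split_ifs at hx <;> omega
      refine ⟨⟨x, hxm⟩, ?_, rfl⟩
      simp only
      split_ifs at hx <;> omega
  rw [← card_map Fin.valEmbedding, hmap, card_insert_of_notMem, Nat.card_Ico]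
  · omega
  · rw [mem_Ico]
    split_ifs <;> omega

theorem chainSet_injective (hl : 2 ≤ l) (hlm : 2 * l ≤ m + 1) :
    Function.Injective (chainSet m : Fin l → Finset (Fin m)) := by
  intro i j hij
  have hcard := congrArg card hij
  rw [card_chainSet hl hlm, card_chainSet hl hlm] at hcard
  omega

theorem eq_of_forall_mem_chainSet_iff (hl : 3 ≤ l) (hml : m ≤ 2 * l) {x y : Fin m}
    (h : ∀ i : Fin l, x ∈ chainSet m i ↔ y ∈ chainSet m i) : x = y := by
  wlog hxy : x < y generalizing x y
  · rcases (not_lt.mp hxy).eq_or_lt with heq | hlt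
    · exact heq.symm
    · exact (this (fun i ↦ (h i).symm) hlt).symm
  exfalso
  simp only [mem_chainSet] at h
  by_cases hyl : y.val < l
  · have := h ⟨y, hyl⟩
    simp only at this
    omega
  by_cases hxl : x.val < l
  · have h₀ := h ⟨0, by omega⟩
    have h₁ := h ⟨1, by omega⟩
    have hlast := h ⟨l - 1, by omega⟩
    simp only at h₀ h₁ hlast
    omega
  · have := h ⟨x - l + 1, by omega⟩
    simp only at this
    omega

theorem isRigidFamily_image_chainSet (hl : 3 ≤ l) (hlm : 2 * l ≤ m + 1) (hml : m ≤ 2 * l) :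
    IsRigidFamily (univ.image (chainSet (l := l) m)) := by
  refine isRigidFamily_of_injOn_card ?_ fun x y h ↦
    eq_of_forall_mem_chainSet_iff hl hml fun i ↦ h _ (mem_image_of_mem _ (mem_univ i))
  rw [coe_image, coe_univ, Set.image_univ]
  rintro _ ⟨i, rfl⟩ _ ⟨j, rfl⟩ hij
  have hl2 : 2 ≤ l := by omega
  rw [card_chainSet hl2 hlm, card_chainSet hl2 hlm] at hij
  rw [show i = j by omega]

theorem exists_isRigidFamily_card_eq_of_ge {k : ℕ} (hm : 5 ≤ m) (hmk : (m + 1) / 2 ≤ k)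
    (hkm : k ≤ m) : ∃ F : Finset (Finset (Fin m)), #F = k ∧ IsRigidFamily F := by
  obtain ⟨l, hl⟩ : ∃ l, l = (m + 1) / 2 := ⟨_, rfl⟩
  have hl3 : 3 ≤ l := by omega
  have hlm : 2 * l ≤ m + 1 := by omega
  have hcard : #(univ.image (chainSet (l := l) m)) = l := by
    rw [card_image_of_injective _ (chainSet_injective (by omega) hlm), card_univ, Fintype.card_fin]
  have hsingle : m ≤ #{A : Finset (Fin m) | ¬ 2 ≤ #A} :=
    calc m = #(powersetCard 1 (univ : Finset (Fin m))) := by simp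
      _ ≤ _ := card_le_card fun A hA ↦ by
        simp [(mem_powersetCard.mp hA).2]
  refine (isRigidFamily_image_chainSet hl3 hlm (by omega)).exists_card_eq (2 ≤ ·)
    (forall_mem_image.mpr fun i _ ↦ ?_) (by omega) (by omega)
  rw [card_chainSet (by omega) hlm]
  omega

end ChainFamily

theorem exists_isRigidFamily_card_eq {m k : ℕ} (hm : 5 ≤ m) (hk₁ : (m + 1) / 2 ≤ k)
    (hk₂ : k + (m + 1) / 2 ≤ 2 ^ m) :
    ∃ F : Finset (Finset (Fin m)), #F = k ∧ IsRigidFamily F := by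
  wlog hk : 2 * k ≤ 2 ^ m generalizing k
  · obtain ⟨F, hF, hrigid⟩ := this (k := 2 ^ m - k) (by omega) (by omega) (by omega)
    refine ⟨Fᶜ, ?_, hrigid.compl⟩
    rw [card_compl, Fintype.card_finset, Fintype.card_fin]
    omega
  rcases le_total k m with hkm | hmk
  · exact exists_isRigidFamily_card_eq_of_ge hm hk₁ hkm
  · exact exists_isRigidFamily_card_eq_of_le hm hmk hk

section Incidence

/-- The orientation of the complete bipartite graph on `α ⊕ β` in which `e y` is the set of
in-neighbours of `y : β`. -/
def incidenceOrientation (e : β → Finset α) : α ⊕ β → α ⊕ β → Prop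
  | .inl x, .inr y => x ∈ e y
  | .inr y, .inl x => x ∉ e y
  | _, _ => False

theorem isOrientation_incidenceOrientation (e : β → Finset α) :
    IsOrientation (fun u v ↦ u.isLeft ≠ v.isLeft) (incidenceOrientation e) := by
  constructor <;> rintro (x | y) (x' | y') <;> simp [incidenceOrientation, em, em']

theorem exists_eq_sumCongr_of_isLeft_eq (φ : α ⊕ β ≃ γ ⊕ δ) (h : ∀ u, (φ u).isLeft = u.isLeft) :
    ∃ (f : α ≃ γ) (g : β ≃ δ), φ = f.sumCongr g := by
  have hl (a : α) : (φ (.inl a)).isLeft := h (.inl a)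
  have hr (b : β) : (φ (.inr b)).isRight := by simp [← Sum.not_isLeft, h]
  have hl' (c : γ) : (φ.symm (.inl c)).isLeft := by simp [← h]
  have hr' (d : δ) : (φ.symm (.inr d)).isRight := by simp [← Sum.not_isLeft, ← h]
  refine ⟨⟨fun a ↦ (φ (.inl a)).getLeft (hl a), fun c ↦ (φ.symm (.inl c)).getLeft (hl' c),
    fun a ↦ by simp, fun c ↦ by simp⟩, ⟨fun b ↦ (φ (.inr b)).getRight (hr b),
    fun d ↦ (φ.symm (.inr d)).getRight (hr' d), fun b ↦ by simp, fun d ↦ by simp⟩, ?_⟩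
  ext (a | b) <;> simp

theorem IsAutom.isLeft_eq_or_isLeft_eq_not {A : α ⊕ β → α ⊕ β → Prop} {φ : Equiv.Perm (α ⊕ β)}
    (hφ : IsAutom A φ) (hA : ∀ u v, A u v ∨ A v u ↔ u.isLeft ≠ v.isLeft) :
    (∀ u, (φ u).isLeft = u.isLeft) ∨ ∀ u, (φ u).isLeft = !u.isLeft := by
  have hside (u v : α ⊕ β) : (φ u).isLeft ≠ (φ v).isLeft ↔ u.isLeft ≠ v.isLeft := by
    rw [← hA, ← hA, ← hφ, ← hφ]
  by_contra! ⟨⟨u, hu⟩, ⟨v, hv⟩⟩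
  have huv := hside u v
  grind

theorem isRigid_incidenceOrientation [Fintype β] [DecidableEq α] {e : β → Finset α}
    (he : Function.Injective e) (hrigid : IsRigidFamily (univ.image e))
    (hswap : ∀ (f : α ≃ β) (g : β ≃ α), ¬ ∀ x y, x ∈ e y ↔ g y ∉ e (f x)) :
    IsRigid (incidenceOrientation e) := by
  intro φ hφ
  rcases hφ.isLeft_eq_or_isLeft_eq_not (isOrientation_incidenceOrientation e).2 with hside | hside
  · obtain ⟨σ, τ, rfl⟩ := exists_eq_sumCongr_of_isLeft_eq φ hside
    have hmem (x : α) (y : β) : x ∈ e y ↔ σ x ∈ e (τ y) := hφ (.inl x) (.inr y)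
    have hmap (y : β) : (e y).map σ.toEmbedding = e (τ y) := by
      ext x
      rw [mem_map_equiv, hmem, Equiv.apply_symm_apply]
    have hσ : σ = 1 := hrigid σ (forall_mem_image.mpr fun y _ ↦
      hmap y ▸ mem_image_of_mem e (mem_univ (τ y)))
    have hτ : τ = 1 := Equiv.ext fun y ↦ he (by
      ext x
      rw [Equiv.Perm.one_apply, hmem x y, hσ, Equiv.Perm.one_apply])
    rw [hσ, hτ]
    exact Equiv.Perm.sumCongr_one
  · obtain ⟨f, g, hfg⟩ := exists_eq_sumCongr_of_isLeft_eq (φ.trans (Equiv.sumComm α β))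
      fun u ↦ by
        rw [Equiv.trans_apply, Equiv.sumComm_apply, Sum.isLeft_swap, ← Sum.bnot_isLeft, hside,
          Bool.not_not]
    obtain rfl : φ = (f.sumCongr g).trans (Equiv.sumComm β α) := by
      rw [← hfg]
      ext u
      simp
    exact (hswap f g fun x y ↦ hφ (.inl x) (.inr y)).elim

end Incidence

theorem Km_2pow_sub_k_rigid_general (m n : ℕ) (hm : 5 ≤ m) (hn₁ : (m + 1) / 2 ≤ n)
    (hn₂ : n + (m + 1) / 2 ≤ 2 ^ m) :
    ∃ A : Fin m ⊕ Fin n → Fin m ⊕ Fin n → Prop, IsOrientation (bipAdj m n) A ∧ IsRigid A := by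
  rcases eq_or_ne n m with rfl | hnm
  · exact ⟨incidenceOrientation pathEdge, isOrientation_incidenceOrientation _,
      isRigid_incidenceOrientation pathEdge_injective isRigidFamily_image_pathEdge
        (not_swap_pathEdge (by omega))⟩
  obtain ⟨F, hF, hrigid⟩ := exists_isRigidFamily_card_eq hm hn₁ hn₂
  let e : Fin n → Finset (Fin m) := fun y ↦ ((F.equivFinOfCardEq hF).symm y).val
  have he : Function.Injective e := Subtype.val_injective.comp (Equiv.injective _)
  have himage : univ.image e = F := by
    refine eq_of_subset_of_card_le (image_subset_iff.mpr fun y _ ↦ Subtype.property _) ?_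
    rw [card_image_of_injective _ he, card_univ, Fintype.card_fin, hF]
  refine ⟨incidenceOrientation e, isOrientation_incidenceOrientation e,
    isRigid_incidenceOrientation he (himage ▸ hrigid) fun f ↦ ?_⟩
  exact absurd (Fintype.card_congr f) (by simpa using hnm.symm)

/-- For all integers `m ≥ 5` and `⌈m/2⌉ ≤ k < 2^m - m`, the complete bipartite graph
`K_{m, 2^m - k}` admits a rigid orientation. (Note `⌈m/2⌉ = (m + 1) / 2` in natural
number arithmetic.) -/
theorem Km_2pow_sub_k_rigid (m k : ℕ) (hm : 5 ≤ m)
    (hk₁ : (m + 1) / 2 ≤ k) (hk₂ : k < 2 ^ m - m) :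
    ∃ A : Sum (Fin m) (Fin (2 ^ m - k)) → Sum (Fin m) (Fin (2 ^ m - k)) → Prop,
      IsOrientation (bipAdj m (2 ^ m - k)) A ∧ IsRigid A :=
  Km_2pow_sub_k_rigid_general m (2 ^ m - k) hm (by omega) (by omega)
end
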